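/- Let N ≥ 2 and τ ∈ ℝ. Define the softmax aggregator on the simplex by F_τ(c) = Σ_{j=1}^N c_j · e^{τ c_j} / (Σ_{ℓ=1}^N e^{τ c_ℓ}) for c = (c_1,…,c_N) with c_j ≥ 0 and Σ_j c_j = 1. Then the supremum of F_τ over the simplex equals 1/N when τ ≤ 0 (attained at the uniform vector (1/N,…,1/N)), and equals σ(τ,N) = e^τ/(e^τ + N − 1) when τ > 0 (attained at the one-hot vectors). -/

import Mathlib

open Finset

/-- The simplex `Δ^{N−1}`: non-negative coordinates summing to 1. -/
def simplex (N : ℕ) : Set (Fin N → ℝ) :=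
  {c | (∀ j, 0 ≤ c j) ∧ ∑ j, c j = 1}

/-- The softmax aggregator `F_τ(c) = Σ_j c_j · e^{τ c_j} / (Σ_ℓ e^{τ c_ℓ})`. -/
noncomputable def softmaxAgg (τ : ℝ) {N : ℕ} (c : Fin N → ℝ) : ℝ :=
  ∑ j, c j * Real.exp (τ * c j) / (∑ l, Real.exp (τ * c l))

/-- `σ(τ,N) = e^τ / (e^τ + N − 1)`. -/
noncomputable def sigma' (τ : ℝ) (N : ℕ) : ℝ :=
  Real.exp τ / (Real.exp τ + N - 1)

theorem softmaxAgg_le_iff (τ : ℝ) {N : ℕ} [NeZero N] (c : Fin N → ℝ) (a : ℝ) :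
    softmaxAgg τ c ≤ a ↔
      ∑ j, c j * Real.exp (τ * c j) ≤ a * ∑ j, Real.exp (τ * c j) := by
  have hpos : 0 < ∑ j, Real.exp (τ * c j) :=
    Finset.sum_pos (fun _ _ => Real.exp_pos _) Finset.univ_nonempty
  rw [softmaxAgg, ← Finset.sum_div, div_le_iff₀ hpos]

/-- Chebyshev's sum inequality for `c` and the oppositely ordered weights `e^{τ c}`. -/
theorem softmaxAgg_le_of_nonpos {τ : ℝ} (hτ : τ ≤ 0) {N : ℕ} [NeZero N] {c : Fin N → ℝ}
    (hc : c ∈ simplex N) : softmaxAgg τ c ≤ 1 / N := by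
  have hN : (0 : ℝ) < N := by exact_mod_cast Nat.pos_of_neZero N
  have hanti : Antivary c fun j => Real.exp (τ * c j) := by
    intro i j hij
    have := Real.exp_lt_exp.mp hij
    by_contra! h
    nlinarith
  have h := hanti.card_mul_sum_le_sum_mul_sum
  rw [hc.2, one_mul, Fintype.card_fin] at h
  rw [softmaxAgg_le_iff, one_div, inv_mul_eq_div, le_div_iff₀ hN, mul_comm]
  exact h

/-- The chord bound behind the case `0 ≤ τ`; both sides agree at `x = 0` and at `x = 1`. -/
theorem exp_mul_one_sub_le {τ x n : ℝ} (hτ : 0 ≤ τ) (hx0 : 0 ≤ x) (hx1 : x ≤ 1) (hn : 1 ≤ n) :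
    Real.exp τ * (1 - n * x) ≤
      Real.exp (τ * x) * (Real.exp τ - (Real.exp τ + n - 1) * x) := by
  have h1 : 1 ≤ Real.exp (τ * x) := Real.one_le_exp (mul_nonneg hτ hx0)
  have h2 : Real.exp (τ * x) ≤ Real.exp τ :=
    Real.exp_le_exp.mpr (mul_le_of_le_one_right hτ hx1)
  have h3 : 0 ≤ (Real.exp (τ * x) - 1) * (Real.exp τ * (1 - x)) :=
    mul_nonneg (sub_nonneg.mpr h1) (mul_nonneg (Real.exp_pos τ).le (sub_nonneg.mpr hx1))
  have h4 : 0 ≤ (n - 1) * x * (Real.exp τ - Real.exp (τ * x)) :=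
    mul_nonneg (mul_nonneg (sub_nonneg.mpr hn) hx0) (sub_nonneg.mpr h2)
  linarith

theorem softmaxAgg_le_of_nonneg {τ : ℝ} (hτ : 0 ≤ τ) {N : ℕ} [NeZero N] {c : Fin N → ℝ}
    (hc : c ∈ simplex N) : softmaxAgg τ c ≤ sigma' τ N := by
  have hN : (1 : ℝ) ≤ N := by exact_mod_cast Nat.pos_of_neZero N
  have hS : 0 < Real.exp τ + N - 1 := by linarith [Real.exp_pos τ]
  have hc1 (j : Fin N) : c j ≤ 1 :=
    hc.2 ▸ Finset.single_le_sum (fun i _ => hc.1 i) (Finset.mem_univ j)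
  have h := Finset.sum_le_sum fun j (_ : j ∈ Finset.univ) =>
    exp_mul_one_sub_le hτ (hc.1 j) (hc1 j) hN
  have hleft : ∑ j, Real.exp τ * (1 - N * c j) = 0 := by
    rw [← Finset.mul_sum, Finset.sum_sub_distrib, ← Finset.mul_sum, hc.2]
    simp
  have hright : ∑ j, Real.exp (τ * c j) * (Real.exp τ - (Real.exp τ + N - 1) * c j) =
      Real.exp τ * ∑ j, Real.exp (τ * c j) -
        (∑ j, c j * Real.exp (τ * c j)) * (Real.exp τ + N - 1) := by
    rw [Finset.mul_sum, Finset.sum_mul, ← Finset.sum_sub_distrib]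
    exact Finset.sum_congr rfl fun j _ => by ring
  rw [hleft, hright] at h
  rw [softmaxAgg_le_iff, sigma', div_mul_eq_mul_div, le_div_iff₀ hS]
  linarith

theorem uniform_mem_simplex (N : ℕ) [NeZero N] :
    (fun _ : Fin N => 1 / (N : ℝ)) ∈ simplex N :=
  ⟨fun _ => by positivity, by simp⟩

theorem softmaxAgg_uniform (τ : ℝ) (N : ℕ) [NeZero N] :
    softmaxAgg τ (fun _ : Fin N => 1 / (N : ℝ)) = 1 / N := by
  have hN : (N : ℝ) ≠ 0 := NeZero.ne _
  simp only [softmaxAgg, Finset.sum_const, Finset.card_univ, Fintype.card_fin, nsmul_eq_mul]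
  field_simp

theorem oneHot_mem_simplex {N : ℕ} (j0 : Fin N) :
    (fun j => if j = j0 then (1 : ℝ) else 0) ∈ simplex N :=
  ⟨fun j => by positivity, by simp⟩

theorem softmaxAgg_oneHot (τ : ℝ) {N : ℕ} (j0 : Fin N) :
    softmaxAgg τ (fun j => if j = j0 then (1 : ℝ) else 0) = sigma' τ N := by
  have hsum : ∑ j, Real.exp (τ * if j = j0 then (1 : ℝ) else 0) = Real.exp τ + N - 1 := by
    have h (j : Fin N) : Real.exp (τ * if j = j0 then (1 : ℝ) else 0) =
        (if j = j0 then Real.exp τ - 1 else 0) + 1 := by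
      split_ifs <;> simp
    simp only [h, Finset.sum_add_distrib, Finset.sum_ite_eq', Finset.mem_univ, if_true,
      Finset.sum_const, Finset.card_univ, Fintype.card_fin, nsmul_eq_mul]
    ring
  rw [softmaxAgg, hsum, ← Finset.sum_div, sigma']
  simp

/-- the supremum of the softmax aggregator `F_τ` over the simplex
equals `1/N` when `τ ≤ 0` (attained at the uniform vector), and equals `σ(τ,N)`
when `τ > 0` (attained at the one-hot vectors). -/
theorem stmt7 (N : ℕ) (hN : 2 ≤ N) (τ : ℝ) :
    (τ ≤ 0 → IsGreatest (softmaxAgg τ '' simplex N) (1 / N) ∧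
      (fun _ : Fin N => 1 / (N : ℝ)) ∈ simplex N ∧
      softmaxAgg τ (fun _ : Fin N => 1 / (N : ℝ)) = 1 / N) ∧
    (0 < τ → IsGreatest (softmaxAgg τ '' simplex N) (sigma' τ N) ∧
      ∀ j0 : Fin N, (fun j => if j = j0 then (1 : ℝ) else 0) ∈ simplex N ∧
        softmaxAgg τ (fun j => if j = j0 then (1 : ℝ) else 0) = sigma' τ N) := by
  have : NeZero N := ⟨by omega⟩
  refine ⟨fun hτ => ⟨⟨⟨_, uniform_mem_simplex N, softmaxAgg_uniform τ N⟩, ?_⟩,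
      uniform_mem_simplex N, softmaxAgg_uniform τ N⟩,
    fun hτ => ⟨⟨⟨_, oneHot_mem_simplex 0, softmaxAgg_oneHot τ 0⟩, ?_⟩,
      fun j0 => ⟨oneHot_mem_simplex j0, softmaxAgg_oneHot τ j0⟩⟩⟩
  · rintro _ ⟨c, hc, rfl⟩
    exact softmaxAgg_le_of_nonpos hτ hc
  · rintro _ ⟨c, hc, rfl⟩
    exact softmaxAgg_le_of_nonneg hτ.le hc
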